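/- arXiv:1403.6532 — 6 statements merged into one kernel-verified Lean document; each statement's English description precedes it below -/
import Mathlib

section
/- Let n ≥ 1 and let μ₁, μ₂ ∈ ℝ^n satisfy (μ₁)_i ≥ 0 for all i and (μ₂)_i ≥ c for all i, for some constant c > 0. Then Σ_{i=1}^n [ (μ₁)_i · ln((μ₁)_i/(μ₂)_i) − (μ₁)_i + (μ₂)_i ] ≤ (1/c) · ‖μ₁ − μ₂‖₂², where the summand is interpreted with the convention 0 · ln 0 = 0. -/
/-!
The inequality holds summand by summand. Bounding the logarithm by `log x ≤ x - 1` at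
`x = μ₁ᵢ / μ₂ᵢ` replaces the Kullback–Leibler term by the chi-squared term `(μ₁ᵢ - μ₂ᵢ)² / μ₂ᵢ`,
which is at most `(μ₁ᵢ - μ₂ᵢ)² / c` because `μ₂ᵢ ≥ c > 0`.
-/

/-- KL divergence bound for Poisson vectors: if `μ₁ ⪰ 0` and `μ₂ ⪰ c·𝟙` for
some `c > 0`, then `KL(Poisson(μ₁) ‖ Poisson(μ₂)) = Σᵢ [μ₁ᵢ ln(μ₁ᵢ/μ₂ᵢ) − μ₁ᵢ + μ₂ᵢ]
≤ (1/c)·‖μ₁ − μ₂‖₂²`.  (Note `Real.log 0 = 0`, so the summand obeys the convention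
`0 · ln 0 = 0`.) -/
theorem poisson_KL_le_sq_dist
    (n : ℕ) (hn : 1 ≤ n) (c : ℝ) (hc : 0 < c)
    (μ₁ μ₂ : Fin n → ℝ)
    (hμ₁ : ∀ i, 0 ≤ μ₁ i) (hμ₂ : ∀ i, c ≤ μ₂ i) :
    ∑ i, (μ₁ i * Real.log (μ₁ i / μ₂ i) - μ₁ i + μ₂ i)
      ≤ (1 / c) * ∑ i, (μ₁ i - μ₂ i) ^ 2 := by
  rw [Finset.mul_sum]
  refine Finset.sum_le_sum fun i _ => ?_
  have hb : 0 < μ₂ i := hc.trans_le (hμ₂ i)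
  -- `log x ≤ x - 1` fails at `x = 0` (as `Real.log 0 = 0`), but there the factor `μ₁ i` vanishes.
  have hlog : μ₁ i * Real.log (μ₁ i / μ₂ i) ≤ μ₁ i * (μ₁ i / μ₂ i - 1) := by
    rcases (hμ₁ i).eq_or_lt with h | h
    · simp [← h]
    · exact mul_le_mul_of_nonneg_left (Real.log_le_sub_one_of_pos (div_pos h hb)) h.le
  calc μ₁ i * Real.log (μ₁ i / μ₂ i) - μ₁ i + μ₂ i
      ≤ μ₁ i * (μ₁ i / μ₂ i - 1) - μ₁ i + μ₂ i := by linarith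
    _ = (1 / μ₂ i) * (μ₁ i - μ₂ i) ^ 2 := by field_simp; ring
    _ ≤ (1 / c) * (μ₁ i - μ₂ i) ^ 2 := by gcongr; exact hμ₂ i
end

section
/- Let p ≥ 2 and 1 ≤ k ≤ p−1 be integers. Let D ∈ ℝ^{p×p} be an orthogonal matrix whose first column is d₁ = p^{−1/2}(1,…,1)^⊤, let D̄ ∈ ℝ^{p×(p−1)} be D with its first column removed, and let λ_k = λ_k(D̄) be the k-sparse localization quantity of D̄. Let β ∈ {−1, 0, 1}^{p−1} with ‖β‖₀ ≤ k and let α > 0 satisfy α·λ_k ≤ 1/p. Define θ = (1/√p, αβ^⊤)^⊤ ∈ ℝ^p and f = Dθ. Then f_i ≥ 0 for every i ∈ {1,…,p} and ‖f‖₁ = 1. -/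
/-!
Since `D i 0 = 1/√p`, each entry is `f i = 1/p + α (D̄β) i`. For nonnegativity it suffices that
`-(D̄β) i ≤ λ_k`. The definition of `λ_k` only ranges over vectors with exactly `k` nonzeros, so
`β` is first enlarged to a vector `v` with exactly `k` nonzeros; the new signs are
chosen opposite to the entries of row `i`, so that `(D̄v) i ≤ (D̄β) i`
(`neg_mulVec_le_sparseLoc`). For the norm, every column of `D̄` is orthogonal to the constant first
column and hence sums to zero, so `∑ f i = 1`, and nonnegativity removes the absolute values.
-/

open scoped Classical

/-- The `k`-sparse localization quantity of a matrix `X` with `q` columns: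
`λ_k(X) = max{ ‖Xv‖_∞ : v ∈ {−1,0,1}^q, ‖v‖₀ = k }`.  (The norm on `Fin m → ℝ` is the
sup norm.) -/
noncomputable def sparseLoc {m q : ℕ} (X : Matrix (Fin m) (Fin q) ℝ) (k : ℕ) : ℝ :=
  sSup { r : ℝ | ∃ v : Fin q → ℝ, (∀ i, v i = -1 ∨ v i = 0 ∨ v i = 1) ∧
    (Finset.univ.filter fun i => v i ≠ 0).card = k ∧ r = ‖X.mulVec v‖ }

/-- The supremum defining `sparseLoc` is over a finite set, so it bounds each of its members. -/
lemma norm_mulVec_le_sparseLoc {m q : ℕ} (X : Matrix (Fin m) (Fin q) ℝ) {k : ℕ} (v : Fin q → ℝ)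
    (hv : ∀ i, v i = -1 ∨ v i = 0 ∨ v i = 1)
    (hk : (Finset.univ.filter fun i => v i ≠ 0).card = k) :
    ‖X.mulVec v‖ ≤ sparseLoc X k := by
  refine le_csSup ?_ ⟨v, hv, hk, rfl⟩
  have hfin : (Set.univ.pi fun _ : Fin q => ({-1, 0, 1} : Set ℝ)).Finite :=
    Set.Finite.pi fun _ => Set.toFinite _
  refine ((hfin.image fun v => ‖X.mulVec v‖).subset ?_).bddAbove
  rintro r ⟨w, hw, -, rfl⟩
  exact ⟨w, fun i _ => by simpa using hw i, rfl⟩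

/-- A sign vector with at most `k` nonzeros can be completed to one with exactly `k` nonzeros
without increasing the `i`-th entry of its image, so `sparseLoc` controls it as well. -/
lemma neg_mulVec_le_sparseLoc {m q : ℕ} (X : Matrix (Fin m) (Fin q) ℝ) {k : ℕ} (hkq : k ≤ q)
    (β : Fin q → ℝ) (hβ : ∀ i, β i = -1 ∨ β i = 0 ∨ β i = 1)
    (hβk : (Finset.univ.filter fun i => β i ≠ 0).card ≤ k) (i : Fin m) :
    -(X.mulVec β i) ≤ sparseLoc X k := by
  obtain ⟨S, hS, hSk⟩ := Finset.exists_superset_card_eq hβk (by simpa using hkq)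
  -- On `S` outside the support of `β`, the sign is opposite to that of `X i j`.
  let v : Fin q → ℝ := fun j =>
    if β j ≠ 0 then β j else if j ∈ S then (if 0 ≤ X i j then -1 else 1) else 0
  have hv : ∀ j, v j = -1 ∨ v j = 0 ∨ v j = 1 := by
    intro j
    simp only [v]
    split_ifs <;> simp [hβ j]
  have hsupp : (Finset.univ.filter fun j => v j ≠ 0) = S := by
    ext j
    have hj : β j ≠ 0 → j ∈ S := fun h => hS (by simpa using h)
    simp only [v, Finset.mem_filter, Finset.mem_univ, true_and]
    split_ifs <;> simp_all
  have hle : X.mulVec v i ≤ X.mulVec β i := by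
    simp only [Matrix.mulVec, dotProduct]
    refine Finset.sum_le_sum fun j _ => ?_
    simp only [v]
    split_ifs with h1 h2 h3
    · exact le_rfl
    · rw [not_not.mp h1]; linarith
    · rw [not_not.mp h1]; linarith
    · rw [not_not.mp h1]
  have h1 := norm_mulVec_le_sparseLoc X v hv (by rw [hsupp, hSk])
  have h2 := norm_le_pi_norm (X.mulVec v) i
  have h3 := neg_le_abs (X.mulVec v i)
  rw [Real.norm_eq_abs] at h2
  linarith

/-- Write `p = q + 1` with `q ≥ 1` (so `p ≥ 2`).  Let `D` be orthogonal with
constant first column `p^{−1/2}·𝟙`, let `D̄` be `D` with the first column removed and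
`λ_k = λ_k(D̄)` its `k`-sparse localization quantity.  If `β ∈ {−1,0,1}^q` has at most `k`
nonzeros and `0 < α` satisfies `α·λ_k ≤ 1/p`, then `f = Dθ` with `θ = (1/√p, αβ)` is entrywise
nonnegative with `‖f‖₁ = 1`. -/
theorem packing_element_nonneg_unit_l1
    (q k : ℕ) (hq : 1 ≤ q) (hk : 1 ≤ k) (hkq : k ≤ q)
    (D : Matrix (Fin (q + 1)) (Fin (q + 1)) ℝ)
    (hD : D.transpose * D = 1)
    (hD1 : ∀ j, D j 0 = 1 / Real.sqrt (q + 1))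
    (Dbar : Matrix (Fin (q + 1)) (Fin q) ℝ)
    (hDbar : Dbar = Matrix.of fun i (j : Fin q) => D i j.succ)
    (α : ℝ) (hα : 0 < α)
    (halam : α * sparseLoc Dbar k ≤ 1 / ((q : ℝ) + 1))
    (β : Fin q → ℝ)
    (hβval : ∀ i, β i = -1 ∨ β i = 0 ∨ β i = 1)
    (hβ0 : (Finset.univ.filter fun i => β i ≠ 0).card ≤ k)
    (θ : Fin (q + 1) → ℝ)
    (hθ : θ = Fin.cons (1 / Real.sqrt (q + 1)) (fun i => α * β i))
    (f : Fin (q + 1) → ℝ) (hf : f = D.mulVec θ) :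
    (∀ i, 0 ≤ f i) ∧ ∑ i, |f i| = 1 := by
  have hq0 : (0 : ℝ) < q + 1 := by positivity
  have hs : Real.sqrt ((q : ℝ) + 1) ≠ 0 := (Real.sqrt_pos.mpr hq0).ne'
  have hfi : ∀ i, f i = 1 / ((q : ℝ) + 1) + α * Dbar.mulVec β i := by
    intro i
    subst hf hθ hDbar
    simp only [Matrix.mulVec, dotProduct, Fin.sum_univ_succ, Fin.cons_zero, Fin.cons_succ, hD1,
      Matrix.of_apply, Finset.mul_sum]
    congr 1
    · rw [div_mul_div_comm, Real.mul_self_sqrt hq0.le, one_mul]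
    · exact Finset.sum_congr rfl fun j _ => by ring
  have hnonneg : ∀ i, 0 ≤ f i := by
    intro i
    have h := mul_le_mul_of_nonneg_left
      (neg_mulVec_le_sparseLoc Dbar hkq β hβval hβ0 i) hα.le
    rw [hfi]
    linarith
  -- Column `j + 1` is orthogonal to the constant column `0`.
  have hcol : ∀ j, ∑ i, Dbar i j = 0 := by
    intro j
    have h := congrFun (congrFun hD 0) j.succ
    rw [Matrix.one_apply_ne (Fin.succ_ne_zero j).symm, Matrix.mul_apply] at h
    simp only [Matrix.transpose_apply, hD1, ← Finset.mul_sum] at h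
    simpa [hDbar, hs] using h
  have hzero : ∑ i, Dbar.mulVec β i = 0 := by
    simp only [Matrix.mulVec, dotProduct]
    rw [Finset.sum_comm]
    simp only [← Finset.sum_mul, hcol, zero_mul, Finset.sum_const_zero]
  refine ⟨hnonneg, ?_⟩
  simp only [abs_of_nonneg (hnonneg _)]
  simp only [hfi, Finset.sum_add_distrib, ← Finset.mul_sum, hzero]
  simp [hq0.ne']
end

section
/- Let p ≥ 2 and 1 ≤ k ≤ p−1 be integers. Let D^{DCT} ∈ ℝ^{p×p} be the discrete cosine transform matrix with entries D^{DCT}_{j,1} = √(1/p) for j = 1,…,p and D^{DCT}_{j,ℓ} = √(2/p)·cos((2j−1)(ℓ−1)π/(2p)) for ℓ = 2,…,p, j = 1,…,p, and let D̄^{DCT} ∈ ℝ^{p×(p−1)} be the submatrix consisting of columns 2 through p. Then λ_k(D̄^{DCT}) ≤ √2·k/√p. -/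
/-!
Every entry of the matrix is `√(2/p)` times a cosine, hence at most `√(2/p) = √2/√p` in absolute
value. A row of `X v` is a signed sum of exactly `k` such entries when `v` is a `{-1,0,1}`-vector
with `k` nonzero entries, so the triangle inequality bounds it by `k · √2/√p`.
-/

open scoped Classical

/-- **Statement 7.** Write `p = q + 1` with `q ≥ 1` (so `p ≥ 2`).  For the discrete cosine
transform matrix (whose first column is the constant column `√(1/p)` and whose remaining
entries are `√(2/p)·cos((2j−1)(ℓ−1)π/(2p))` in 1-based indexing), the submatrix `D̄^{DCT}`
of columns `2,…,p` satisfies `λ_k(D̄^{DCT}) ≤ √2·k/√p` for `1 ≤ k ≤ p − 1`. -/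
theorem sparseLoc_DCT_le
    (q k : ℕ) (hq : 1 ≤ q) (hk : 1 ≤ k) (hkq : k ≤ q)
    (Dbar : Matrix (Fin (q + 1)) (Fin q) ℝ)
    (hDbar : Dbar = Matrix.of fun (i : Fin (q + 1)) (j : Fin q) =>
      Real.sqrt (2 / ((q : ℝ) + 1)) *
        Real.cos ((2 * (i : ℝ) + 1) * ((j : ℝ) + 1) * Real.pi / (2 * ((q : ℝ) + 1)))) :
    sparseLoc Dbar k ≤ Real.sqrt 2 * k / Real.sqrt ((q : ℝ) + 1) := by
  -- `Real.sSup_le` needs no nonemptiness, only that the bound is nonnegative.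
  refine Real.sSup_le ?_ (by positivity)
  rintro r ⟨v, hv, hcard, rfl⟩
  refine (pi_norm_le_iff_of_nonneg (by positivity)).2 fun i => ?_
  have hentry : ∀ j, |Dbar i j| ≤ Real.sqrt (2 / ((q : ℝ) + 1)) := fun j => by
    rw [hDbar, Matrix.of_apply, abs_mul, abs_of_nonneg (Real.sqrt_nonneg _)]
    exact mul_le_of_le_one_right (Real.sqrt_nonneg _) (Real.abs_cos_le_one _)
  calc ‖Dbar.mulVec v i‖ ≤ ∑ j, |Dbar i j * v j| := by
        rw [Real.norm_eq_abs]
        exact Finset.abs_sum_le_sum_abs (fun j => Dbar i j * v j) Finset.univ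
    _ ≤ ∑ j, if v j ≠ 0 then Real.sqrt (2 / ((q : ℝ) + 1)) else 0 := by
        refine Finset.sum_le_sum fun j _ => ?_
        rcases hv j with h | h | h <;> simp [h, -Nat.ofNat_nonneg, -Real.sqrt_div'] <;>
          simpa using hentry j
    _ = k * Real.sqrt (2 / ((q : ℝ) + 1)) := by
        rw [← Finset.sum_filter, Finset.sum_const, nsmul_eq_mul, ← hcard]
    _ = Real.sqrt 2 * k / Real.sqrt ((q : ℝ) + 1) := by
        rw [Real.sqrt_div zero_le_two]
        ring
end

section
/- Let n, p ≥ 1 and s ≥ 1 be integers, a_ℓ < a_u reals, and δ ∈ [0,1). Let D ∈ ℝ^{p×p} be an orthogonal matrix, let Ã ∈ ℝ^{n×p} have all entries in [a_ℓ/√n, a_u/√n], assume ‖ÃDu‖₂² ≤ (1+δ)‖u‖₂² for every u ∈ ℝ^p with ‖u‖₀ ≤ 2s, and set A = (Ã + ((a_u − 2a_ℓ)/√n)·𝟙_{n×p}) / (2√n(a_u − a_ℓ)). Let f, f' ∈ ℝ^p be entrywise nonnegative with ‖f‖₁ = ‖f'‖₁ = 1 and ‖D^⊤(f − f')‖₀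 ≤ 2s, and let T > 0. Then Σ_{i=1}^n [ T(Af)_i · ln((Af)_i/(Af')_i) − T(Af)_i + T(Af')_i ] ≤ (1+δ)·T / (2(a_u − a_ℓ)²) · ‖f − f'‖₂². -/
/-!
Since `log t ≤ t - 1`, each Poisson divergence term `x log (x / y) - x + y` is at most
`(x - y)² / y`. The affine rescaling makes all entries of `A` at least `1 / (2n)`, and `f'` has
total mass one, so `y = (A f')ᵢ ≥ 1 / (2n)` and the divergence is at most
`2 n T ‖A (f - f')‖²`. As `f` and `f'` have equal mass, the constant shift in `A` annihilates
`f - f'`, so `A (f - f')` is `At (f - f') / (2 √n (au - al))`. Finally `f - f' = D u` with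
`u = Dᵀ (f - f')` sparse and of the same Euclidean norm, so the restricted isometry bound applies.
-/


open scoped Classical

/-- One coordinate of the Poisson divergence is dominated by the `χ²` term, with the
denominator `y` replaced by a lower bound `c`. -/
lemma mul_log_div_sub_add_le {x y c : ℝ} (hx : 0 < x) (hc : 0 < c) (hy : c ≤ y) :
    x * Real.log (x / y) - x + y ≤ (x - y) ^ 2 / c := by
  have hy0 : 0 < y := hc.trans_le hy
  have h1 : x * Real.log (x / y) ≤ x * (x / y - 1) :=
    mul_le_mul_of_nonneg_left (Real.log_le_sub_one_of_pos (div_pos hx hy0)) hx.le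
  have h2 : x * (x / y - 1) - x + y = (x - y) ^ 2 / y := by
    field_simp
    ring
  have h3 : (x - y) ^ 2 / y ≤ (x - y) ^ 2 / c := by gcongr
  linarith

lemma le_mulVec_of_forall_le {n p : ℕ} {A : Matrix (Fin n) (Fin p) ℝ} {c : ℝ}
    (hA : ∀ i j, c ≤ A i j) {g : Fin p → ℝ} (hg : ∀ j, 0 ≤ g j) (hg1 : ∑ j, g j = 1)
    (i : Fin n) : c ≤ A.mulVec g i := by
  calc c = ∑ j, c * g j := by rw [← Finset.mul_sum, hg1, mul_one]
    _ ≤ ∑ j, A i j * g j :=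
      Finset.sum_le_sum fun j _ => mul_le_mul_of_nonneg_right (hA i j) (hg j)

/-- An orthogonal change of basis preserves the Euclidean norm. -/
lemma sum_sq_transpose_mulVec {p : ℕ} {D : Matrix (Fin p) (Fin p) ℝ}
    (hD : D * D.transpose = 1) (v : Fin p → ℝ) :
    ∑ i, (D.transpose.mulVec v i) ^ 2 = ∑ i, (v i) ^ 2 := by
  have h : D.transpose.mulVec v ⬝ᵥ D.transpose.mulVec v = v ⬝ᵥ v := by
    rw [Matrix.dotProduct_mulVec, Matrix.vecMul_transpose, Matrix.mulVec_mulVec, hD,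
      Matrix.one_mulVec]
  simpa only [dotProduct, sq] using h

/-- **Statement 8.** KL divergence bound for Poisson observations of two unit-intensity
nonnegative signals whose difference is `2s`-sparse in the basis `D`:
`KL(Poisson(T·Af) ‖ Poisson(T·Af')) ≤ (1+δ)·T/(2(au−aℓ)²)·‖f − f'‖₂²`. -/
theorem poisson_KL_bound_for_sensing
    (n p s : ℕ) (hn : 1 ≤ n) (hp : 1 ≤ p) (hs : 1 ≤ s)
    (al au : ℝ) (hau : al < au)
    (δ : ℝ) (hδ0 : 0 ≤ δ) (hδ1 : δ < 1)
    (D : Matrix (Fin p) (Fin p) ℝ) (hD : D.transpose * D = 1)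
    (At : Matrix (Fin n) (Fin p) ℝ)
    (hAt : ∀ i j, At i j ∈ Set.Icc (al / Real.sqrt n) (au / Real.sqrt n))
    (hRIP : ∀ u : Fin p → ℝ, (Finset.univ.filter fun i => u i ≠ 0).card ≤ 2 * s →
      ∑ i, ((At * D).mulVec u i) ^ 2 ≤ (1 + δ) * ∑ i, (u i) ^ 2)
    (A : Matrix (Fin n) (Fin p) ℝ)
    (hA : A = Matrix.of fun i j =>
      (At i j + (au - 2 * al) / Real.sqrt n) / (2 * Real.sqrt n * (au - al)))
    (f f' : Fin p → ℝ)
    (hf : ∀ j, 0 ≤ f j) (hf' : ∀ j, 0 ≤ f' j)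
    (hf1 : ∑ j, |f j| = 1) (hf'1 : ∑ j, |f' j| = 1)
    (hsparse : (Finset.univ.filter
      fun i => D.transpose.mulVec (f - f') i ≠ 0).card ≤ 2 * s)
    (T : ℝ) (hT : 0 < T) :
    ∑ i, (T * A.mulVec f i * Real.log (A.mulVec f i / A.mulVec f' i)
        - T * A.mulVec f i + T * A.mulVec f' i)
      ≤ (1 + δ) * T / (2 * (au - al) ^ 2) * ∑ j, (f j - f' j) ^ 2 := by
  have hn0 : (0 : ℝ) < n := by exact_mod_cast hn
  have hr : 0 < Real.sqrt n := Real.sqrt_pos.2 hn0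
  have hrr : Real.sqrt n ^ 2 = n := Real.sq_sqrt hn0.le
  have hd : 0 < au - al := sub_pos.2 hau
  have hsf : ∑ j, f j = 1 := by simpa only [abs_of_nonneg (hf _)] using hf1
  have hsf' : ∑ j, f' j = 1 := by simpa only [abs_of_nonneg (hf' _)] using hf'1
  have hc : (0 : ℝ) < 1 / (2 * n) := by positivity
  have hAlow : ∀ i j, 1 / (2 * (n : ℝ)) ≤ A i j := by
    intro i j
    have h1 := (hAt i j).1
    have h2 : 1 / (2 * (n : ℝ)) =
        (al / Real.sqrt n + (au - 2 * al) / Real.sqrt n) / (2 * Real.sqrt n * (au - al)) := by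
      field_simp
      rw [hrr]
      ring
    rw [hA, Matrix.of_apply, h2]
    gcongr
  have hx := le_mulVec_of_forall_le hAlow hf hsf
  have hy := le_mulVec_of_forall_le hAlow hf' hsf'
  -- The constant shift contributes a multiple of `∑ j, (f j - f' j) = 0`.
  have hdiff : ∀ i, A.mulVec f i - A.mulVec f' i =
      At.mulVec (f - f') i / (2 * Real.sqrt n * (au - al)) := by
    intro i
    set k := (au - 2 * al) / Real.sqrt n
    set m := 2 * Real.sqrt n * (au - al)
    have h0 : ∑ j, (f j - f' j) = 0 := by rw [Finset.sum_sub_distrib, hsf, hsf', sub_self]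
    calc A.mulVec f i - A.mulVec f' i
        = ∑ j, (At i j * (f j - f' j) / m + k / m * (f j - f' j)) := by
          simp only [Matrix.mulVec, dotProduct, hA, Matrix.of_apply]
          rw [← Finset.sum_sub_distrib]
          exact Finset.sum_congr rfl fun j _ => by ring
      _ = At.mulVec (f - f') i / m := by
          rw [Finset.sum_add_distrib, ← Finset.mul_sum, h0, mul_zero, add_zero,
            ← Finset.sum_div]
          rfl
  have hD' : D * D.transpose = 1 := mul_eq_one_comm.1 hD
  have hAtle : ∑ i, (At.mulVec (f - f') i) ^ 2 ≤ (1 + δ) * ∑ j, (f j - f' j) ^ 2 := by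
    have h := hRIP _ hsparse
    rw [sum_sq_transpose_mulVec hD', Matrix.mulVec_mulVec, Matrix.mul_assoc, hD',
      Matrix.mul_one] at h
    exact h
  calc ∑ i, (T * A.mulVec f i * Real.log (A.mulVec f i / A.mulVec f' i)
        - T * A.mulVec f i + T * A.mulVec f' i)
      ≤ ∑ i, T / (2 * (au - al) ^ 2) * (At.mulVec (f - f') i) ^ 2 := by
        refine Finset.sum_le_sum fun i _ => ?_
        have h := mul_le_mul_of_nonneg_left
          (mul_log_div_sub_add_le (hc.trans_le (hx i)) hc (hy i)) hT.le
        have e : T * ((A.mulVec f i - A.mulVec f' i) ^ 2 / (1 / (2 * (n : ℝ)))) =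
            T / (2 * (au - al) ^ 2) * (At.mulVec (f - f') i) ^ 2 := by
          rw [hdiff]
          field_simp
          rw [hrr]
        linarith
    _ = T / (2 * (au - al) ^ 2) * ∑ i, (At.mulVec (f - f') i) ^ 2 := by rw [Finset.mul_sum]
    _ ≤ T / (2 * (au - al) ^ 2) * ((1 + δ) * ∑ j, (f j - f' j) ^ 2) := by gcongr
    _ = (1 + δ) * T / (2 * (au - al) ^ 2) * ∑ j, (f j - f' j) ^ 2 := by ring
end

section
/- Let n, p ≥ 1 and s ≥ 1 be integers, a_ℓ < a_u reals, and δ ∈ [0,1). Let D ∈ ℝ^{p×p} be an orthogonal matrix, let Ã ∈ ℝ^{n×p} have all entries in [a_ℓ/√n, a_u/√n], assume ‖ÃDu‖₂² ≥ (1−δ)‖u‖₂² for every u ∈ ℝ^p with ‖u‖₀ ≤ 2s, and set A = (Ã + ((a_u − 2a_ℓ)/√n)·𝟙_{n×p}) / (2√n(a_u − a_ℓ)). Then for any f, f' ∈ ℝ^p with Σ_{j=1}^p f_j = Σ_{j=1}^p f'_j and ‖D^⊤(f − f')‖₀ ≤ 2s, one has ‖f − f'‖₂² ≤ 4n(a_u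 − a_ℓ)² / (1−δ) · ‖A(f − f')‖₂². -/
open scoped Classical

/-!
Put `v = f - f'`. Its coordinates sum to zero, so the constant shift in `A` annihilates it and
`A v = At v / (2 √n (au - al))`. As `D` is square, `Dᵀ D = 1` also gives `D Dᵀ = 1`; hence
`u = Dᵀ v` satisfies `D u = v` and `‖u‖ = ‖v‖`, and the restricted isometry bound at the sparse
vector `u` is `(1 - δ) ‖v‖² ≤ ‖At v‖²`, which is the claim after rescaling.
-/

/-- **Statement 10.** RIP-type lower bound transferred to the physically constrained matrix
`A`: if `Σ_j f_j = Σ_j f'_j` and `Dᵀ(f − f')` is `2s`-sparse, then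
`‖f − f'‖₂² ≤ 4n(au−aℓ)²/(1−δ)·‖A(f − f')‖₂²`. -/
theorem constrained_RIP_lower
    (n p s : ℕ) (hn : 1 ≤ n) (hp : 1 ≤ p) (hs : 1 ≤ s)
    (al au : ℝ) (hau : al < au)
    (δ : ℝ) (hδ0 : 0 ≤ δ) (hδ1 : δ < 1)
    (D : Matrix (Fin p) (Fin p) ℝ) (hD : D.transpose * D = 1)
    (At : Matrix (Fin n) (Fin p) ℝ)
    (hAt : ∀ i j, At i j ∈ Set.Icc (al / Real.sqrt n) (au / Real.sqrt n))
    (hRIP : ∀ u : Fin p → ℝ, (Finset.univ.filter fun i => u i ≠ 0).card ≤ 2 * s →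
      (1 - δ) * ∑ i, (u i) ^ 2 ≤ ∑ i, ((At * D).mulVec u i) ^ 2)
    (A : Matrix (Fin n) (Fin p) ℝ)
    (hA : A = Matrix.of fun i j =>
      (At i j + (au - 2 * al) / Real.sqrt n) / (2 * Real.sqrt n * (au - al)))
    (f f' : Fin p → ℝ)
    (hsum : ∑ j, f j = ∑ j, f' j)
    (hsparse : (Finset.univ.filter
      fun i => D.transpose.mulVec (f - f') i ≠ 0).card ≤ 2 * s) :
    ∑ j, (f j - f' j) ^ 2
      ≤ 4 * n * (au - al) ^ 2 / (1 - δ) * ∑ i, (A.mulVec (f - f') i) ^ 2 := by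
  have hn' : (0 : ℝ) < n := by exact_mod_cast hn
  have hs0 : 0 < Real.sqrt n := Real.sqrt_pos.mpr hn'
  have hδ : 0 < 1 - δ := by linarith
  have ha : 0 < au - al := by linarith
  have hDD : D * D.transpose = 1 := mul_eq_one_comm.mp hD
  set v : Fin p → ℝ := f - f' with hv
  have hv0 : ∑ j, v j = 0 := by simp [hv, Finset.sum_sub_distrib, hsum]
  have key := hRIP (D.transpose.mulVec v) hsparse
  rw [Matrix.mulVec_mulVec, Matrix.mul_assoc, hDD, Matrix.mul_one] at key
  have hnorm : ∑ i, (D.transpose.mulVec v i) ^ 2 = ∑ j, (v j) ^ 2 := by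
    have h : D.transpose.mulVec v ⬝ᵥ D.transpose.mulVec v = v ⬝ᵥ v := by
      rw [Matrix.dotProduct_mulVec, Matrix.vecMul_transpose, Matrix.mulVec_mulVec, hDD,
        Matrix.one_mulVec]
    simpa [dotProduct, sq] using h
  rw [hnorm] at key
  have hAv : ∀ i, A.mulVec v i = At.mulVec v i / (2 * Real.sqrt n * (au - al)) := by
    intro i
    simp only [hA, Matrix.mulVec, dotProduct, Matrix.of_apply]
    -- the constant shift contributes a multiple of `∑ j, v j = 0`
    calc ∑ j, (At i j + (au - 2 * al) / Real.sqrt n) / (2 * Real.sqrt n * (au - al)) * v j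
        = ∑ j, (At i j * v j / (2 * Real.sqrt n * (au - al))
            + (au - 2 * al) / Real.sqrt n / (2 * Real.sqrt n * (au - al)) * v j) :=
          Finset.sum_congr rfl fun j _ => by ring
      _ = (∑ j, At i j * v j) / (2 * Real.sqrt n * (au - al)) := by
          rw [Finset.sum_add_distrib, ← Finset.mul_sum, hv0, mul_zero, add_zero,
            Finset.sum_div]
  have hsq : (2 * Real.sqrt n * (au - al)) ^ 2 = 4 * n * (au - al) ^ 2 := by
    rw [mul_pow, mul_pow, Real.sq_sqrt hn'.le]
    norm_num
  have hpos : 0 < 4 * (n : ℝ) * (au - al) ^ 2 := by positivity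
  simp only [hAv, div_pow, hsq]
  rw [← Finset.sum_div, div_mul_div_comm, mul_comm (1 - δ), mul_div_mul_left _ _ hpos.ne',
    le_div_iff₀ hδ, mul_comm]
  exact key
end

section
/- (Lower bound at low intensity for spike-sparsifying bases.) Let p ≥ 4, 1 ≤ s ≤ p−1, n ≥ 1 be integers, a_ℓ < a_u reals, and δ ∈ [0,1). Let D ∈ ℝ^{p×p} be an orthogonal matrix whose first column is d₁ = p^{−1/2}(1,…,1)^⊤, with D̄ denoting D with its first column removed, and suppose every standard basis vector e_j of ℝ^p satisfies ‖D̄^⊤ e_j‖₀ ≤ s (for the discrete Haar wavelet basis this holds whenever s ≥ log₂ p). Let Ã ∈ ℝ^{n×p} have all entries in [a_ℓ/√n, a_u/√n], assume ‖ÃDu‖₂² ≤ (1+δ)‖u‖₂² for every u ∈ ℝ^p with ‖u‖₀ ≤ 2s, and set A = (Ã + ((a_u − 2a_ℓ)/√n)·𝟙_{n×p}) / (2√n(a_u − a_ℓ)). If 0 < T ≤ (a_u − a_ℓ)²·ln(p) / (4(1+δ)), then the minimax risk satisfies inf_{f̂} sup_{f* ∈ F_{p,s,D}} E‖f̂(y)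 − f*‖₂² ≥ 1/8. -/
open scoped Classical ENNReal
open MeasureTheory

/-!
The spikes `e_j` all lie in the signal class, and at most one of them is at squared distance less
than `1/2` from a given estimate `a`.  So it suffices that no decision rule identifies the true
spike with success probability above `3/4` for every `j`.

Success probabilities are bounded through the second moment of the likelihood ratio (a
`χ²` version of Fano's inequality).  Write `P_j` for the law of `y` at the spike `e_j`, with
rates `λ_j`.  The product of Poisson laws satisfies the exact identity
`P_j{y}² = exp(∑ᵢ (λ_ji - λ_0i)² / λ_0i) · S_j{y} · P_0{y}`, where `S_j` is again a product of
Poisson laws, with rates `λ_j² / λ_0` (`poisson_pi_sq`).  The entries of `A` are at least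
`1/(2n)` and `Dᵀ(e_j - e_0)` is `2s`-sparse, so the exponent is at most `ln(p)/4`
(`sum_sq_div_le`).  With `t = p^{1/4}` the inequality between arithmetic and geometric means
gives `P_j B ≤ 1/(2t) + (t²/2) P_0 B` for every event `B` (`measureReal_le_of_sq`).  Summing over
the disjoint events `B_j` that the estimate is close to `e_j`, the average success probability is
at most `(1/t + 1/t²)/2 < 3/4`, because `t² = √p ≥ 2` (`risk_lower_bound`).
-/

/-! ### Second moments of Poisson likelihood ratios -/

open ProbabilityTheory in
/-- The second moment of a Poisson likelihood ratio is explicit: the square of a Poisson mass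
function, divided by another one, is proportional to a third. -/
lemma poisson_sq {l l₀ : ℝ} (hl : 0 ≤ l) (h₀ : 0 < l₀) (k : ℕ) :
    (poissonMeasure l.toNNReal).real {k} ^ 2 =
      Real.exp ((l - l₀) ^ 2 / l₀) * (poissonMeasure (l ^ 2 / l₀).toNNReal).real {k} *
        (poissonMeasure l₀.toNNReal).real {k} := by
  have h2 : 0 ≤ l ^ 2 / l₀ := by positivity
  simp only [poissonMeasure_real_singleton, Real.coe_toNNReal _ hl, Real.coe_toNNReal _ h₀.le,
    Real.coe_toNNReal _ h2]
  have hf : (k.factorial : ℝ) ≠ 0 := by positivity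
  have e : Real.exp (-l) ^ 2 =
      Real.exp ((l - l₀) ^ 2 / l₀) * Real.exp (-(l ^ 2 / l₀)) * Real.exp (-l₀) := by
    rw [← Real.exp_add, ← Real.exp_add, ← Real.exp_nat_mul]
    congr 1
    field_simp
    push_cast
    ring
  have e2 : (l ^ k) ^ 2 = (l ^ 2 / l₀) ^ k * l₀ ^ k := by
    rw [← mul_pow, div_mul_cancel₀ _ h₀.ne', ← pow_mul, ← pow_mul, mul_comm]
  rw [div_pow, mul_pow, e, e2]
  field_simp

open ProbabilityTheory in
/-- The identity of `poisson_sq`, tensorized over the independent coordinates. -/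
lemma poisson_pi_sq {n : ℕ} {l l₀ : Fin n → ℝ} (hl : ∀ i, 0 ≤ l i) (h₀ : ∀ i, 0 < l₀ i)
    (y : Fin n → ℕ) :
    (Measure.pi fun i => poissonMeasure (l i).toNNReal).real {y} ^ 2 =
      Real.exp (∑ i, (l i - l₀ i) ^ 2 / l₀ i) *
        (Measure.pi fun i => poissonMeasure (l i ^ 2 / l₀ i).toNNReal).real {y} *
        (Measure.pi fun i => poissonMeasure (l₀ i).toNNReal).real {y} := by
  have h : ∀ m : Fin n → ℝ, (Measure.pi fun i => poissonMeasure (m i).toNNReal).real {y} =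
      ∏ i, (poissonMeasure (m i).toNNReal).real {y i} := by
    intro m
    simp only [measureReal_def, Measure.pi_singleton, ENNReal.toReal_prod]
  rw [h l, h l₀, h fun i => l i ^ 2 / l₀ i, Real.exp_sum, ← Finset.prod_pow,
    ← Finset.prod_mul_distrib, ← Finset.prod_mul_distrib]
  exact Finset.prod_congr rfl fun i _ => poisson_sq (hl i) (h₀ i) (y i)

/-! ### Testing between many hypotheses -/

/-- Change of measure: a bound `K` on the second moment of `dP/dQ` controls `P` by `Q` up to an
additive error, with a free trade-off parameter `c`. -/
lemma measureReal_le_of_sq {Ω : Type*} [MeasurableSpace Ω] [Countable Ω]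
    [MeasurableSingletonClass Ω] (P S Q : Measure Ω) [IsProbabilityMeasure P]
    [IsProbabilityMeasure S] [IsProbabilityMeasure Q] {K c : ℝ} (hK : 0 ≤ K) (hc : 0 < c)
    (h : ∀ y, P.real {y} ^ 2 = K * S.real {y} * Q.real {y}) (B : Set Ω) :
    P.real B ≤ c * K / 2 + 1 / (2 * c) * Q.real B := by
  have hb : 0 ≤ 1 / (2 * c) := by positivity
  have ha : 0 ≤ c * K / 2 := by positivity
  have hpt : ∀ y, P {y} ≤
      (ENNReal.ofReal (c * K / 2) • S + ENNReal.ofReal (1 / (2 * c)) • Q) {y} := by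
    intro y
    have hp : P.real {y} ≤ c * K / 2 * S.real {y} + 1 / (2 * c) * Q.real {y} := by
      have hS : 0 ≤ S.real {y} := measureReal_nonneg
      have hQ : 0 ≤ Q.real {y} := measureReal_nonneg
      refine abs_le_of_sq_le_sq' ?_ (by positivity) |>.2
      -- `(x + z)² ≥ 4xz`, and here `4xz` is exactly `K S{y} Q{y}`
      have e : 4 * (c * K / 2 * S.real {y}) * (1 / (2 * c) * Q.real {y}) =
          K * S.real {y} * Q.real {y} := by field_simp; ring
      rw [h y, ← e]
      nlinarith [sq_nonneg (c * K / 2 * S.real {y} - 1 / (2 * c) * Q.real {y})]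
    rw [Measure.add_apply, Measure.smul_apply, Measure.smul_apply, smul_eq_mul, smul_eq_mul,
      ← ofReal_measureReal (μ := P), ← ofReal_measureReal (μ := S), ← ofReal_measureReal (μ := Q),
      ← ENNReal.ofReal_mul ha, ← ENNReal.ofReal_mul hb,
      ← ENNReal.ofReal_add (by positivity) (by positivity)]
    exact ENNReal.ofReal_le_ofReal hp
  have hB : P B ≤ (ENNReal.ofReal (c * K / 2) • S + ENNReal.ofReal (1 / (2 * c)) • Q) B := by
    rw [← Measure.tsum_indicator_apply_singleton P B B.to_countable.measurableSet,
      ← Measure.tsum_indicator_apply_singleton _ B B.to_countable.measurableSet]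
    exact ENNReal.tsum_le_tsum fun y => Set.indicator_le_indicator (hpt y)
  rw [Measure.add_apply, Measure.smul_apply, Measure.smul_apply, smul_eq_mul, smul_eq_mul,
    ← ofReal_measureReal (μ := P), ← ofReal_measureReal (μ := S), ← ofReal_measureReal (μ := Q),
    ← ENNReal.ofReal_mul ha, ← ENNReal.ofReal_mul hb,
    ← ENNReal.ofReal_add (by positivity) (by positivity),
    ENNReal.ofReal_le_ofReal_iff (by positivity)] at hB
  have hS1 : S.real B ≤ 1 := measureReal_le_one
  nlinarith

/-- The spikes are separated: no point is within squared distance `1/2` of two of them. -/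
lemma spike_separation {p : ℕ} (a : Fin p → ℝ) {j k : Fin p} (hjk : j ≠ k)
    (hj : ∑ i, (a i - Pi.single (M := fun _ => ℝ) j 1 i) ^ 2 < 1 / 2)
    (hk : ∑ i, (a i - Pi.single (M := fun _ => ℝ) k 1 i) ^ 2 < 1 / 2) : False := by
  have key : ∀ b : Fin p → ℝ, b j ^ 2 + b k ^ 2 ≤ ∑ i, b i ^ 2 := by
    intro b
    rw [← Finset.sum_pair (f := fun i => b i ^ 2) hjk]
    exact Finset.sum_le_sum_of_subset_of_nonneg (Finset.subset_univ _) fun _ _ _ => sq_nonneg _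
  have h1 := key fun i => a i - Pi.single (M := fun _ => ℝ) j 1 i
  have h2 := key fun i => a i - Pi.single (M := fun _ => ℝ) k 1 i
  simp only [Pi.single_eq_same, Pi.single_eq_of_ne hjk, Pi.single_eq_of_ne hjk.symm] at h1 h2
  nlinarith [sq_nonneg (2 * a j - 1), sq_nonneg (2 * a k - 1)]

/-- Multiple-hypothesis lower bound: if the laws `P j` all have likelihood ratios to one law `Q`
with second moment at most `p^{1/4}`, some spike is estimated with risk at least `1/8`. -/
lemma risk_lower_bound {Ω : Type*} [MeasurableSpace Ω] [Countable Ω]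
    [MeasurableSingletonClass Ω] {p : ℕ} (hp : 4 ≤ p) (P S : Fin p → Measure Ω) (Q : Measure Ω)
    [∀ j, IsProbabilityMeasure (P j)] [∀ j, IsProbabilityMeasure (S j)] [IsProbabilityMeasure Q]
    (K : Fin p → ℝ) (hK0 : ∀ j, 0 ≤ K j) (hK : ∀ j, K j ≤ Real.exp (Real.log p / 4))
    (h : ∀ j y, (P j).real {y} ^ 2 = K j * (S j).real {y} * Q.real {y})
    (fhat : Ω → Fin p → ℝ) :
    ∃ j, (1 / 8 : ℝ≥0∞) ≤ ∫⁻ y, ENNReal.ofReal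
      (∑ i, (fhat y i - Pi.single (M := fun _ => ℝ) j 1 i) ^ 2) ∂(P j) := by
  by_contra! hcon
  set t := Real.exp (Real.log p / 4) with ht
  have ht0 : 0 < t := Real.exp_pos _
  have hp' : (4 : ℝ) ≤ p := by exact_mod_cast hp
  have ht4 : t ^ 4 = p := by
    rw [ht, ← Real.exp_nat_mul]
    push_cast
    rw [mul_div_cancel₀ _ (by norm_num), Real.exp_log (by linarith)]
  have ht2 : 2 ≤ t ^ 2 := by nlinarith [sq_nonneg t]
  set B : Fin p → Set Ω := fun j =>
    {y | ∑ i, (fhat y i - Pi.single (M := fun _ => ℝ) j 1 i) ^ 2 < 1 / 2} with hB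
  have hmeas : ∀ s : Set Ω, MeasurableSet s := fun s => s.to_countable.measurableSet
  -- a risk below `1/8` forces the estimate to be close to the spike with probability above `3/4`
  have hlow : ∀ j, 3 / 4 < (P j).real (B j) := by
    intro j
    have hm := mul_meas_ge_le_lintegral (μ := P j) (f := fun y => ENNReal.ofReal
      (∑ i, (fhat y i - Pi.single (M := fun _ => ℝ) j 1 i) ^ 2))
      (fun s _ => hmeas _) (ENNReal.ofReal (1 / 2))
    have hset : {y | ENNReal.ofReal (1 / 2) ≤ ENNReal.ofReal
        (∑ i, (fhat y i - Pi.single (M := fun _ => ℝ) j 1 i) ^ 2)} = (B j)ᶜ := by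
      ext y
      simp only [hB, Set.mem_ofPred_eq, Set.mem_compl_iff, not_lt]
      exact ENNReal.ofReal_le_ofReal_iff (Finset.sum_nonneg fun _ _ => sq_nonneg _)
    rw [hset, ← ofReal_measureReal (μ := P j), ← ENNReal.ofReal_mul (by norm_num),
      probReal_compl_eq_one_sub (hmeas _)] at hm
    have h8 : (1 / 8 : ℝ≥0∞) = ENNReal.ofReal (1 / 8) := by
      rw [ENNReal.ofReal_div_of_pos (by norm_num)]
      simp
    have hlt := hm.trans_lt (hcon j)
    rw [h8, ENNReal.ofReal_lt_ofReal_iff (by norm_num)] at hlt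
    linarith
  have hup : ∀ j, (P j).real (B j) ≤ 1 / (2 * t) + t ^ 2 / 2 * Q.real (B j) := by
    intro j
    -- the trade-off parameter `c = 1/t²` balances the two error terms
    have h1 := measureReal_le_of_sq (P j) (S j) Q (hK0 j) (c := 1 / t ^ 2) (by positivity)
      (h j) (B j)
    have e1 : 1 / t ^ 2 * K j / 2 ≤ 1 / (2 * t) := by
      calc 1 / t ^ 2 * K j / 2 ≤ 1 / t ^ 2 * t / 2 := by gcongr; exact hK j
        _ = 1 / (2 * t) := by field_simp
    have e2 : 1 / (2 * (1 / t ^ 2)) = t ^ 2 / 2 := by field_simp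
    rw [e2] at h1
    linarith
  have hQ : ∑ j, Q.real (B j) ≤ 1 := by
    rw [← measureReal_iUnion_fintype _ fun j => hmeas _]
    · exact measureReal_le_one
    · intro j k hjk
      rw [Function.onFun, Set.disjoint_left]
      exact fun y hj hk => spike_separation (fhat y) hjk hj hk
  have hsum : ∑ _j : Fin p, (3 / 4 : ℝ) ≤
      ∑ j, (1 / (2 * t) + t ^ 2 / 2 * Q.real (B j)) :=
    Finset.sum_le_sum fun j _ => (hlow j).le.trans (hup j)
  rw [Finset.sum_add_distrib, ← Finset.mul_sum] at hsum
  simp only [Finset.sum_const, Finset.card_univ, Fintype.card_fin, nsmul_eq_mul, ← ht4] at hsum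
  have e3 : t ^ 4 * (1 / (2 * t)) = t ^ 2 * (t / 2) := by field_simp
  rw [e3] at hsum
  have h5 : t ^ 2 * (3 / 4 * t ^ 2) ≤ t ^ 2 * (t / 2 + 1 / 2) := by nlinarith
  have h6 := le_of_mul_le_mul_left h5 (by positivity)
  nlinarith [sq_nonneg (t - 1)]

/-! ### Rates at two spikes -/

/-- The `χ²` exponent between the laws at two spikes.  The lower bound `1/(2n)` on the rates
turns it into `‖Ã(e_j - e_k)‖²`, which the upper isometry bound controls because
`Dᵀ(e_j - e_k)` is `2s`-sparse: the constant column of `D` does not see the difference. -/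
lemma sum_sq_div_le {q s n : ℕ} (hn : 1 ≤ n) {al au δ : ℝ} (hau : al < au)
    (hδ0 : 0 ≤ δ) (D : Matrix (Fin (q + 1)) (Fin (q + 1)) ℝ) (hD : D.transpose * D = 1)
    (hD1 : ∀ j, D j 0 = 1 / Real.sqrt (q + 1))
    (hspike : ∀ j : Fin (q + 1), (Finset.univ.filter fun i : Fin q => D j i.succ ≠ 0).card ≤ s)
    (At : Matrix (Fin n) (Fin (q + 1)) ℝ)
    (hRIP : ∀ u : Fin (q + 1) → ℝ,
      (Finset.univ.filter fun i => u i ≠ 0).card ≤ 2 * s →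
      ∑ i, ((At * D).mulVec u i) ^ 2 ≤ (1 + δ) * ∑ i, (u i) ^ 2)
    (A : Matrix (Fin n) (Fin (q + 1)) ℝ)
    (hA : A = Matrix.of fun i j =>
      (At i j + (au - 2 * al) / Real.sqrt n) / (2 * Real.sqrt n * (au - al)))
    (hAlow : ∀ i j, 1 / (2 * n : ℝ) ≤ A i j)
    {T : ℝ} (hT : 0 < T)
    (hTle : T ≤ (au - al) ^ 2 * Real.log ((q : ℝ) + 1) / (4 * (1 + δ))) (j k : Fin (q + 1)) :
    ∑ i, (T * A i j - T * A i k) ^ 2 / (T * A i k) ≤ Real.log ((q : ℝ) + 1) / 4 := by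
  have hn0 : (0 : ℝ) < n := by exact_mod_cast hn
  have hg : 0 < au - al := sub_pos.2 hau
  have hD' : D * D.transpose = 1 := mul_eq_one_comm.1 hD
  have hrip : ∑ i, (At i j - At i k) ^ 2 ≤ (1 + δ) * 2 := by
    set u : Fin (q + 1) → ℝ := fun i => D j i - D k i with hu
    have hmul : ∀ i, (At * D).mulVec u i = At i j - At i k := by
      intro i
      have hu' : u = D.transpose.mulVec (Pi.single j 1 - Pi.single k 1) := by
        ext i
        simp [hu, Matrix.mulVec_sub]
      rw [hu', Matrix.mulVec_mulVec, Matrix.mul_assoc, hD', Matrix.mul_one]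
      simp [Matrix.mulVec_sub]
    have hcard : (Finset.univ.filter fun i => u i ≠ 0).card ≤ 2 * s := by
      have hsub : (Finset.univ.filter fun i => u i ≠ 0) ⊆
          ((Finset.univ.filter fun i : Fin q => D j i.succ ≠ 0) ∪
            (Finset.univ.filter fun i : Fin q => D k i.succ ≠ 0)).image Fin.succ := by
        intro i hi
        rw [Finset.mem_filter] at hi
        induction i using Fin.cases with
        | zero => exact absurd (by simp [hu, hD1]) hi.2
        | succ i =>
          refine Finset.mem_image_of_mem _ ?_
          by_contra hc
          simp only [Finset.mem_union, Finset.mem_filter, Finset.mem_univ, true_and, not_or,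
            not_not] at hc
          exact hi.2 (by simp [hu, hc.1, hc.2])
      calc _ ≤ _ := Finset.card_le_card hsub
        _ ≤ _ := Finset.card_image_le
        _ ≤ _ := Finset.card_union_le _ _
        _ ≤ 2 * s := by linarith [hspike j, hspike k]
    have hrow : ∀ a b, ∑ i, D a i * D b i = if a = b then 1 else 0 := by
      intro a b
      have := congrFun (congrFun hD' a) b
      simpa [Matrix.mul_apply, Matrix.one_apply] using this
    have hnorm : ∑ i, u i ^ 2 ≤ 2 := by
      have : ∑ i, u i ^ 2 =
          ∑ i, D j i * D j i - 2 * ∑ i, D j i * D k i + ∑ i, D k i * D k i := by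
        rw [Finset.mul_sum, ← Finset.sum_sub_distrib, ← Finset.sum_add_distrib]
        exact Finset.sum_congr rfl fun i _ => by simp only [hu]; ring
      rw [this, hrow, hrow, hrow]
      split_ifs <;> norm_num
    have := hRIP u hcard
    simp only [hmul] at this
    exact this.trans (by gcongr)
  have hterm : ∀ i, (T * A i j - T * A i k) ^ 2 / (T * A i k) ≤
      T / (2 * (au - al) ^ 2) * (At i j - At i k) ^ 2 := by
    intro i
    have hlow := hAlow i k
    have hpos : (0 : ℝ) < 1 / (2 * n) := by positivity
    have hdiff : A i j - A i k = (At i j - At i k) / (2 * Real.sqrt n * (au - al)) := by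
      rw [hA]
      simp only [Matrix.of_apply]
      ring
    have hsq : Real.sqrt n ^ 2 = n := Real.sq_sqrt hn0.le
    calc (T * A i j - T * A i k) ^ 2 / (T * A i k)
        = T * (A i j - A i k) ^ 2 / A i k := by
          have : 0 < A i k := hpos.trans_le hlow
          field_simp
      _ ≤ T * (A i j - A i k) ^ 2 / (1 / (2 * n)) := by gcongr
      _ = T / (2 * (au - al) ^ 2) * (At i j - At i k) ^ 2 := by
          rw [hdiff, div_pow, mul_pow, mul_pow, hsq]
          field_simp
  calc _ ≤ ∑ i, T / (2 * (au - al) ^ 2) * (At i j - At i k) ^ 2 :=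
        Finset.sum_le_sum fun i _ => hterm i
    _ = T / (2 * (au - al) ^ 2) * ∑ i, (At i j - At i k) ^ 2 := by rw [Finset.mul_sum]
    _ ≤ T / (2 * (au - al) ^ 2) * ((1 + δ) * 2) := by gcongr
    _ ≤ ((au - al) ^ 2 * Real.log ((q : ℝ) + 1) / (4 * (1 + δ))) / (2 * (au - al) ^ 2) *
          ((1 + δ) * 2) := by gcongr
    _ = Real.log ((q : ℝ) + 1) / 4 := by
          have : 1 + δ ≠ 0 := by positivity
          field_simp

/-! ### The minimax bound -/

/-- **Statement 16 (low-intensity lower bound for spike-sparsifying bases, Lemma 2).**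
Write `p = q + 1` with `p ≥ 4`.  Suppose the orthogonal matrix `D` has constant first column
`p^{−1/2}·𝟙` and every standard basis vector `e_j` of `ℝ^p` satisfies `‖D̄ᵀ e_j‖₀ ≤ s`
(for the discrete Haar wavelet basis this holds whenever `s ≥ log₂ p`).  Under the physical
constraints and the RIP-type upper bound on `ÃD`, if
`0 < T ≤ (au−aℓ)²·ln(p)/(4(1+δ))`, then the minimax risk over
`F_{p,s,D} = {f ⪰ 0 : ‖f‖₁ = 1, ‖D̄ᵀf‖₀ ≤ s}`, with observations `y ~ Poisson(T·Af*)`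
(a product of Poisson measures on `ℕⁿ`), is at least `1/8`. -/
theorem minimax_lower_bound_low_intensity
    (q s n : ℕ) (hp4 : 4 ≤ q + 1) (hs : 1 ≤ s) (hsq : s ≤ q) (hn : 1 ≤ n)
    (al au : ℝ) (hau : al < au)
    (δ : ℝ) (hδ0 : 0 ≤ δ) (hδ1 : δ < 1)
    (D : Matrix (Fin (q + 1)) (Fin (q + 1)) ℝ) (hD : D.transpose * D = 1)
    (hD1 : ∀ j, D j 0 = 1 / Real.sqrt (q + 1))
    (Dbar : Matrix (Fin (q + 1)) (Fin q) ℝ)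
    (hDbar : Dbar = Matrix.of fun i (j : Fin q) => D i j.succ)
    (hspike : ∀ j : Fin (q + 1),
      (Finset.univ.filter
        fun i => Dbar.transpose.mulVec (Pi.single j (1 : ℝ)) i ≠ 0).card ≤ s)
    (At : Matrix (Fin n) (Fin (q + 1)) ℝ)
    (hAt : ∀ i j, At i j ∈ Set.Icc (al / Real.sqrt n) (au / Real.sqrt n))
    (hRIP : ∀ u : Fin (q + 1) → ℝ,
      (Finset.univ.filter fun i => u i ≠ 0).card ≤ 2 * s →
      ∑ i, ((At * D).mulVec u i) ^ 2 ≤ (1 + δ) * ∑ i, (u i) ^ 2)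
    (A : Matrix (Fin n) (Fin (q + 1)) ℝ)
    (hA : A = Matrix.of fun i j =>
      (At i j + (au - 2 * al) / Real.sqrt n) / (2 * Real.sqrt n * (au - al)))
    (T : ℝ) (hT : 0 < T)
    (hTle : T ≤ (au - al) ^ 2 * Real.log ((q : ℝ) + 1) / (4 * (1 + δ))) :
    (1 / 8 : ℝ≥0∞)
      ≤ ⨅ fhat : (Fin n → ℕ) → Fin (q + 1) → ℝ,
          ⨆ fstar ∈ {f : Fin (q + 1) → ℝ | (∀ i, 0 ≤ f i) ∧ ∑ i, |f i| = 1 ∧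
              (Finset.univ.filter fun i => Dbar.transpose.mulVec f i ≠ 0).card ≤ s},
            ∫⁻ y, ENNReal.ofReal (∑ j, (fhat y j - fstar j) ^ 2)
              ∂(Measure.pi fun i : Fin n =>
                  ProbabilityTheory.poissonMeasure (T * A.mulVec fstar i).toNNReal) := by
  have hn0 : (0 : ℝ) < n := by exact_mod_cast hn
  have hsn : 0 < Real.sqrt n := Real.sqrt_pos.2 hn0
  have hg : 0 < au - al := sub_pos.2 hau
  have hAlow : ∀ i j, 1 / (2 * n : ℝ) ≤ A i j := by
    intro i j
    rw [hA, Matrix.of_apply, le_div_iff₀ (by positivity)]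
    have h1 := (hAt i j).1
    have h2 : Real.sqrt n * Real.sqrt n = n := Real.mul_self_sqrt hn0.le
    have h3 : 1 / (2 * n : ℝ) * (2 * Real.sqrt n * (au - al)) = (au - al) / Real.sqrt n := by
      rw [eq_div_iff hsn.ne']
      calc _ = (au - al) * (Real.sqrt n * Real.sqrt n) / n := by field_simp
        _ = au - al := by rw [h2]; field_simp
    have h4 : al / Real.sqrt n + (au - 2 * al) / Real.sqrt n = (au - al) / Real.sqrt n := by ring
    linarith
  have hApos : ∀ i j, 0 < T * A i j := fun i j =>
    mul_pos hT (lt_of_lt_of_le (by positivity) (hAlow i j))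
  have hspike' : ∀ j : Fin (q + 1),
      (Finset.univ.filter fun i : Fin q => D j i.succ ≠ 0).card ≤ s := by
    intro j
    have := hspike j
    simpa [hDbar] using this
  refine le_iInf fun fhat => ?_
  obtain ⟨j, hj⟩ := risk_lower_bound hp4
    (fun j => Measure.pi fun i : Fin n => ProbabilityTheory.poissonMeasure (T * A i j).toNNReal)
    (fun j => Measure.pi fun i : Fin n =>
      ProbabilityTheory.poissonMeasure ((T * A i j) ^ 2 / (T * A i 0)).toNNReal)
    (Measure.pi fun i : Fin n => ProbabilityTheory.poissonMeasure (T * A i 0).toNNReal)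
    (fun j => Real.exp (∑ i, (T * A i j - T * A i 0) ^ 2 / (T * A i 0)))
    (fun j => (Real.exp_pos _).le)
    (fun j => Real.exp_le_exp.2 (by
      push_cast
      exact sum_sq_div_le hn hau hδ0 D hD hD1 hspike' At hRIP A hA hAlow hT hTle j 0))
    (fun j y => poisson_pi_sq (fun i => (hApos i j).le) (fun i => hApos i 0) y) fhat
  refine le_iSup₂_of_le (Pi.single j 1) ⟨fun i => ?_, ?_, hspike j⟩ ?_
  · by_cases h : i = j <;> simp [h]
  · simp [Pi.single_apply, apply_ite abs]
  · simpa using hj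
end
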